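/- Assume: (i) for every k, q, Q, the maps x ↦ Ψ_k(q, x) and x ↦ P_n(x, Q) are convex with at most linear growth; (ii) each σ_t is L-Lipschitz with values in [0,∞) and semi-convex with the same constant a ≥ 0 (i.e. x ↦ σ_t(x)² + a x² is convex); (iii) h·max(−κ(t_ℓ), 0) < 1/2 for every ℓ. Then for every k ∈ {0,…,n} and every Q, the truncated swing value function ℝ ∋ x ↦ ṽ_k(x, Q) is convex. -/

import Mathlib

open MeasureTheory ProbabilityTheory

/-- Composed truncated Euler transition operators on `ℝ`,
`P̃_{i:j} = P̃_i ∘ ⋯ ∘ P̃_{j−1}` where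
`P̃_ℓ(f)(x) = E f(x + h κ_ℓ (x − ζ) + √h σ_ℓ(x) Z̃^h)` with the truncated noise
`Z̃^h = Z 1_{|Z| ≤ s}`; `P̃_{ℓ:ℓ}(f) = f`. -/
noncomputable def truncEulerComp {Ω : Type*} [MeasurableSpace Ω] (P : Measure Ω)
    (Z : Ω → ℝ) (s h : ℝ) (κ : ℕ → ℝ) (ζ : ℝ) (σ : ℕ → ℝ → ℝ)
    (i j : ℕ) (f : ℝ → ℝ) : ℝ → ℝ :=
  (List.range' i (j - i)).foldr
    (fun ℓ g x =>
      ∫ ω, g (x + h * κ ℓ * (x - ζ) +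
        Real.sqrt h * σ ℓ x * (if |Z ω| ≤ s then Z ω else 0)) ∂P)
    f

open Set Filter Topology

theorem ContDiff.continuous_deriv_deriv {f : ℝ → ℝ} (hf : ContDiff ℝ 2 f) :
    Continuous (deriv (deriv f)) := by
  have := hf.continuous_iteratedDeriv 2 le_rfl
  simpa [iteratedDeriv_succ, iteratedDeriv_zero] using this

theorem ConvexOn.deriv_deriv_nonneg {f : ℝ → ℝ} (hf : ConvexOn ℝ univ f)
    (hf' : Differentiable ℝ f) (y : ℝ) : 0 ≤ deriv (deriv f) y := by
  have hmono : Monotone (deriv f) := monotoneOn_univ.1 (hf.monotoneOn_deriv fun x _ => hf' x)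
  exact hmono.deriv_nonneg

/-- A continuous function whose symmetric second differences are asymptotically nonnegative at
every point is convex. -/
theorem convexOn_univ_of_second_difference {F : ℝ → ℝ} (hF : Continuous F)
    (h : ∀ x₀, ∀ δ > 0, ∀ᶠ e in 𝓝 (0 : ℝ), 2 * F x₀ - δ * e ^ 2 ≤ F (x₀ + e) + F (x₀ - e)) :
    ConvexOn ℝ univ F := by
  refine LinearOrder.convexOn_of_lt convex_univ ?_
  intro x _ y _ hxy p q hp hq hpq
  simp only [smul_eq_mul]
  by_contra! hcon
  set ε := F (p * x + q * y) - (p * F x + q * F y) with hε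
  have hεpos : 0 < ε := by linarith
  have hyx : 0 < y - x := by linarith
  set S := (F y - F x) / (y - x) with hS
  have hSmul : S * (y - x) = F y - F x := by rw [hS]; field_simp
  set δ := ε / (2 * (y - x) ^ 2) with hδ
  have hδpos : 0 < δ := by positivity
  have hδmul : δ * (y - x) ^ 2 = ε / 2 := by rw [hδ]; field_simp
  let G : ℝ → ℝ := fun u => F u - F x - S * (u - x) + δ * ((u - x) * (u - y))
  have hG : Continuous G := by fun_prop
  obtain ⟨u, hu, hmax⟩ := isCompact_Icc.exists_isMaxOn (nonempty_Icc.2 hxy.le) hG.continuousOn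
  have hz : 0 < G (p * x + q * y) := by
    have e1 : p * x + q * y - x = q * (y - x) := by linear_combination x * hpq
    have e2 : p * x + q * y - y = -p * (y - x) := by linear_combination y * hpq
    have e3 : G (p * x + q * y) = ε - p * q * (δ * (y - x) ^ 2) := by
      simp only [G]
      rw [e1, e2]
      have : F (p * x + q * y) = ε + (p * F x + q * F y) := by rw [hε]; ring
      rw [this]
      linear_combination (-q) * hSmul + (F x) * hpq
    rw [e3, hδmul]
    have hpq1 : p * q ≤ 1 := by nlinarith
    nlinarith
  have hzmem : p * x + q * y ∈ Icc x y := by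
    have e1 : p * x + q * y - x = q * (y - x) := by linear_combination x * hpq
    have e2 : y - (p * x + q * y) = p * (y - x) := by linear_combination (-y) * hpq
    constructor <;> nlinarith [mul_pos hq hyx, mul_pos hp hyx]
  have hGu : 0 < G u := hz.trans_le (hmax hzmem)
  have hux : x < u := by
    rcases hu.1.lt_or_eq with h1 | h1
    · exact h1
    · exfalso; subst h1; simp [G] at hGu
  have huy : u < y := by
    rcases hu.2.lt_or_eq with h1 | h1
    · exact h1
    · exfalso; subst h1
      have : G u = 0 := by simp only [G]; linear_combination -hSmul
      linarith
  have hnear : ∀ᶠ e in 𝓝 (0 : ℝ), u + e ∈ Icc x y ∧ u - e ∈ Icc x y := by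
    have h1 : Tendsto (fun e : ℝ => u + e) (𝓝 0) (𝓝 u) := by
      have : Continuous (fun e : ℝ => u + e) := by fun_prop
      simpa using this.tendsto 0
    have h2 : Tendsto (fun e : ℝ => u - e) (𝓝 0) (𝓝 u) := by
      have : Continuous (fun e : ℝ => u - e) := by fun_prop
      simpa using this.tendsto 0
    exact (h1.eventually (Icc_mem_nhds hux huy)).and (h2.eventually (Icc_mem_nhds hux huy))
  obtain ⟨e, ⟨he1, he2, he3⟩, he0⟩ := (((h u δ hδpos).and hnear).filter_mono
    nhdsWithin_le_nhds |>.and (self_mem_nhdsWithin (s := Ioi (0 : ℝ)))).exists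
  have m1 : G (u + e) ≤ G u := hmax he2
  have m2 : G (u - e) ≤ G u := hmax he3
  simp only [G] at m1 m2
  have he0' : 0 < e := he0
  have : 0 < δ * e ^ 2 := by positivity
  nlinarith

/-- On bounded sets, a `C²` function is bounded below by its second-order Taylor polynomial with
slightly decreased quadratic coefficient. -/
theorem exists_forall_taylor_two_le {f : ℝ → ℝ} (hf : ContDiff ℝ 2 f) (R : ℝ) {ε : ℝ}
    (hε : 0 < ε) :
    ∃ η > 0, ∀ y D, |y| ≤ R → |D| ≤ η →
      f y + deriv f y * D + (deriv (deriv f) y - ε) * D ^ 2 / 2 ≤ f (y + D) := by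
  have hf2 : Continuous (deriv (deriv f)) := hf.continuous_deriv_deriv
  have huc := (isCompact_Icc (a := -(R + 1)) (b := R + 1)).uniformContinuousOn_of_continuous
    hf2.continuousOn
  rw [Metric.uniformContinuousOn_iff] at huc
  obtain ⟨η, hη, hη'⟩ := huc ε hε
  refine ⟨min (η / 2) 1, by positivity, fun y D hy hD => ?_⟩
  rcases eq_or_ne D 0 with rfl | hD0
  · simp
  have hDη : |D| < η := by
    have := hD.trans (min_le_left _ _); linarith
  have hD1 : |D| ≤ 1 := hD.trans (min_le_right _ _)
  have hne : y ≠ y + D := by simpa using hD0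
  obtain ⟨ξ, hξ, hT⟩ := taylor_mean_remainder_lagrange_iteratedDeriv (n := 1) hne
    (f := f) (by simpa [one_add_one_eq_two] using hf.contDiffOn)
  have hder : derivWithin f (uIcc y (y + D)) y = deriv f y :=
    (hf.differentiable (by norm_num) y).derivWithin
      (uniqueDiffOn_uIcc hne _ left_mem_uIcc)
  have hdist : |ξ - y| ≤ |D| := by
    have := abs_sub_left_of_mem_uIcc (uIoo_subset_uIcc_self hξ)
    simpa using this
  have hclose : |deriv (deriv f) ξ - deriv (deriv f) y| < ε := by
    have hy' := abs_le.1 hy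
    have hd := abs_le.1 (hdist.trans hD1)
    have := hη' ξ ⟨by linarith, by linarith⟩ y ⟨by linarith, by linarith⟩
      (by rw [Real.dist_eq]; linarith)
    simpa [Real.dist_eq] using this
  have hit : iteratedDeriv 2 f ξ = deriv (deriv f) ξ := by
    simp [iteratedDeriv_succ, iteratedDeriv_zero]
  simp [taylorWithinEval_succ, taylor_within_zero_eval, iteratedDerivWithin_one, hder, hit] at hT
  have := (abs_lt.1 hclose).1
  nlinarith [sq_nonneg D, mul_nonneg (sub_nonneg.2 this.le) (sq_nonneg D)]

/-- A convex function on the line can be approximated, uniformly on bounded sets, by smooth convex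
functions. -/
theorem ConvexOn.exists_contDiff_approx {f : ℝ → ℝ} (hf : ConvexOn ℝ univ f) (R : ℝ) {ε : ℝ}
    (hε : 0 < ε) :
    ∃ g : ℝ → ℝ, ContDiff ℝ 2 g ∧ ConvexOn ℝ univ g ∧ ∀ y, |y| ≤ R → |g y - f y| ≤ ε := by
  have hfc : Continuous f := continuousOn_univ.1 (hf.continuousOn isOpen_univ)
  have huc := (isCompact_Icc (a := -(R + 1)) (b := R + 1)).uniformContinuousOn_of_continuous
    hfc.continuousOn
  rw [Metric.uniformContinuousOn_iff] at huc
  obtain ⟨η, hη, hη'⟩ := huc ε hε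
  have hr : 0 < min η 1 := by positivity
  let φ : ContDiffBump (0 : ℝ) := ⟨min η 1 / 2, min η 1, by positivity, by linarith⟩
  have hint : ∀ x, Integrable (fun t => φ.normed volume t * f (x - t)) := fun x =>
    (φ.continuous_normed.mul (by fun_prop)).integrable_of_hasCompactSupport
      (φ.hasCompactSupport_normed.mul_right)
  refine ⟨convolution (φ.normed volume) f (ContinuousLinearMap.lsmul ℝ ℝ) volume, ?_, ?_, ?_⟩
  · exact φ.hasCompactSupport_normed.contDiff_convolution_left _ φ.contDiff_normed
      hfc.locallyIntegrable
  · refine ⟨convex_univ, fun x _ y _ p q hp hq hpq => ?_⟩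
    simp only [convolution_def, ContinuousLinearMap.lsmul_apply, smul_eq_mul]
    rw [← integral_const_mul, ← integral_const_mul, ← integral_add ((hint x).const_mul p)
      ((hint y).const_mul q)]
    refine integral_mono (hint _) (((hint x).const_mul p).add ((hint y).const_mul q)) fun t => ?_
    have h1 := hf.2 (mem_univ (x - t)) (mem_univ (y - t)) hp hq hpq
    have h2 : p • (x - t) + q • (y - t) = p * x + q * y - t := by
      simp only [smul_eq_mul]; linear_combination (-t) * hpq
    rw [h2] at h1
    have h3 := mul_le_mul_of_nonneg_left h1 (φ.nonneg_normed (μ := volume) t)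
    simp only [smul_eq_mul] at h3
    simp only
    linarith
  · intro y hy
    rw [← Real.dist_eq]
    refine φ.dist_normed_convolution_le hfc.aestronglyMeasurable fun x hx => ?_
    have hx' : dist x y < min η 1 := hx
    have hx1 := hx'.trans_le (min_le_right _ _)
    rw [Real.dist_eq] at hx1
    have h1 := abs_lt.1 hx1
    have h2 := abs_le.1 hy
    exact (hη' x ⟨by linarith, by linarith⟩ y ⟨by linarith, by linarith⟩
      (hx'.trans_le (min_le_left _ _))).le

/-- A convex function on the line has an affine minorant touching it at any given point. -/
theorem ConvexOn.exists_affine_le {w : ℝ → ℝ} (hw : ConvexOn ℝ univ w) (x₀ : ℝ) :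
    ∃ p, ∀ x, w x₀ + p * (x - x₀) ≤ w x := by
  refine ⟨derivWithin w (Ioi x₀) x₀, fun x => ?_⟩
  have hx₀ : x₀ ∈ interior (univ : Set ℝ) := by simp
  rcases lt_trichotomy x x₀ with h | rfl | h
  · have h1 := hw.slope_le_leftDeriv_of_mem_interior (mem_univ x) hx₀ h
    have h2 := hw.leftDeriv_le_rightDeriv_of_mem_interior hx₀
    have h3 := h1.trans h2
    rw [slope_def_field, div_le_iff₀ (by linarith)] at h3
    linarith
  · simp
  · have h1 := hw.rightDeriv_le_slope_of_mem_interior hx₀ (mem_univ x) h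
    rw [slope_def_field, le_div_iff₀ (by linarith)] at h1
    linarith

section BoundedNoise

variable {Ω : Type*} [MeasurableSpace Ω] {P : Measure Ω} {W : Ω → ℝ} {s : ℝ}

theorem Continuous.integrable_comp_of_abs_le [IsFiniteMeasure P] (hW : Measurable W)
    (hWs : ∀ ω, |W ω| ≤ s) {g : ℝ → ℝ} (hg : Continuous g) :
    Integrable (fun ω => g (W ω)) P := by
  obtain ⟨C, hC⟩ := (isCompact_Icc (a := -s) (b := s)).exists_bound_of_continuousOn hg.continuousOn
  exact Integrable.of_bound (hg.measurable.comp hW).aestronglyMeasurable C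
    (ae_of_all _ fun ω => hC _ (abs_le.1 (hWs ω)))

theorem continuous_integral_comp_of_abs_le [IsFiniteMeasure P] (hW : Measurable W)
    (hWs : ∀ ω, |W ω| ≤ s) {G : ℝ → ℝ → ℝ} (hG : Continuous fun p : ℝ × ℝ => G p.1 p.2) :
    Continuous fun x => ∫ ω, G x (W ω) ∂P := by
  refine continuous_iff_continuousAt.2 fun x₀ => ?_
  obtain ⟨C, hC⟩ := ((isCompact_Icc (a := x₀ - 1) (b := x₀ + 1)).prod
    (isCompact_Icc (a := -s) (b := s))).exists_bound_of_continuousOn hG.continuousOn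
  refine continuousAt_of_dominated (bound := fun _ => C) (Eventually.of_forall fun x => ?_) ?_
    (integrable_const C) (ae_of_all _ fun ω => ?_)
  · have : Continuous (G x) := hG.comp (Continuous.prodMk_right x)
    exact (this.measurable.comp hW).aestronglyMeasurable
  · filter_upwards [Icc_mem_nhds (by linarith : x₀ - 1 < x₀) (by linarith : x₀ < x₀ + 1)] with x hx
    exact ae_of_all _ fun ω => hC (x, W ω) ⟨hx, abs_le.1 (hWs ω)⟩
  · exact (hG.comp (Continuous.prodMk_left (W ω))).continuousAt

theorem ConvexOn.le_integral_comp_centered [IsProbabilityMeasure P] (hW : Measurable W)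
    (hWs : ∀ ω, |W ω| ≤ s) (hW0 : ∫ ω, W ω ∂P = 0) {f : ℝ → ℝ} (hf : ConvexOn ℝ univ f)
    (m τ : ℝ) : f m ≤ ∫ ω, f (m + τ * W ω) ∂P := by
  have hfc : Continuous f := continuousOn_univ.1 (hf.continuousOn isOpen_univ)
  have hWi : Integrable W P := continuous_id.integrable_comp_of_abs_le hW hWs
  have h := hf.map_integral_le (μ := P) (f := fun ω => m + τ * W ω) hfc.continuousOn isClosed_univ
    (by simp) ((integrable_const m).add (hWi.const_mul τ))
    (Continuous.integrable_comp_of_abs_le (g := fun w => f (m + τ * w)) hW hWs (by fun_prop))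
  rwa [integral_add (integrable_const m) (hWi.const_mul τ), integral_const_mul, hW0,
    integral_const, probReal_univ, one_smul, mul_zero, add_zero] at h

theorem ConvexOn.integral_comp_centered_mono [IsProbabilityMeasure P] (hW : Measurable W)
    (hWs : ∀ ω, |W ω| ≤ s) (hW0 : ∫ ω, W ω ∂P = 0) {f : ℝ → ℝ} (hf : ConvexOn ℝ univ f)
    (m : ℝ) {τ₁ τ : ℝ} (h0 : 0 ≤ τ₁) (hle : τ₁ ≤ τ) :
    ∫ ω, f (m + τ₁ * W ω) ∂P ≤ ∫ ω, f (m + τ * W ω) ∂P := by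
  rcases (h0.trans hle).eq_or_lt with h | hτ
  · rw [le_antisymm (h ▸ hle) h0, ← h]
  have hfc : Continuous f := continuousOn_univ.1 (hf.continuousOn isOpen_univ)
  have hi : ∀ r, Integrable (fun ω => f (m + r * W ω)) P := fun r =>
    Continuous.integrable_comp_of_abs_le (g := fun w => f (m + r * w)) hW hWs (by fun_prop)
  have hc1 : τ₁ / τ ≤ 1 := (div_le_one hτ).2 hle
  have hJ := hf.le_integral_comp_centered hW hWs hW0 m τ
  calc ∫ ω, f (m + τ₁ * W ω) ∂P
      ≤ ∫ ω, ((1 - τ₁ / τ) * f m + τ₁ / τ * f (m + τ * W ω)) ∂P := by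
        refine integral_mono (hi τ₁) ((integrable_const _).add ((hi τ).const_mul _)) fun ω => ?_
        have h1 := hf.2 (mem_univ m) (mem_univ (m + τ * W ω)) (sub_nonneg.2 hc1)
          (by positivity : 0 ≤ τ₁ / τ) (by ring)
        have h2 : (1 - τ₁ / τ) • m + (τ₁ / τ) • (m + τ * W ω) = m + τ₁ * W ω := by
          simp only [smul_eq_mul]; field_simp; ring
        rw [h2] at h1
        simpa using h1
    _ = (1 - τ₁ / τ) * f m + τ₁ / τ * ∫ ω, f (m + τ * W ω) ∂P := by
        rw [integral_add (integrable_const _) ((hi τ).const_mul _), integral_const_mul,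
          integral_const_mul]
        simp
    _ ≤ ∫ ω, f (m + τ * W ω) ∂P := by
        nlinarith [mul_le_mul_of_nonneg_left hJ (sub_nonneg.2 hc1)]

/-- A nonnegative Lipschitz function whose square is semi-convex has a smooth local minorant
touching it at any point where it is positive. -/
theorem exists_slope_forall_eventually_le {τ : ℝ → ℝ} {M A : ℝ} (hτ : ∀ x, 0 ≤ τ x)
    (hLip : ∀ x y, |τ x - τ y| ≤ M * |x - y|) (hA : 0 ≤ A)
    (hsc : ConvexOn ℝ univ fun x => τ x ^ 2 + A * x ^ 2) {x₀ : ℝ} (h0 : 0 < τ x₀) :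
    ∃ t, |t| ≤ M ∧ ∀ k, M ^ 2 + A < 2 * k * τ x₀ → ∀ᶠ e in 𝓝 (0 : ℝ),
      0 ≤ τ x₀ + t * e - k * e ^ 2 ∧ τ x₀ + t * e - k * e ^ 2 ≤ τ (x₀ + e) := by
  obtain ⟨p, hp⟩ := hsc.exists_affine_le x₀
  set q := p - 2 * A * x₀ with hq
  have hlow : ∀ e, τ x₀ ^ 2 + q * e - A * e ^ 2 ≤ τ (x₀ + e) ^ 2 := fun e => by
    have := hp (x₀ + e)
    rw [hq]; nlinarith
  have hup : ∀ e, τ (x₀ + e) ^ 2 ≤ (τ x₀ + M * |e|) ^ 2 := fun e => by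
    have h1 := (abs_le.1 (hLip (x₀ + e) x₀)).2
    rw [add_sub_cancel_left] at h1
    exact pow_le_pow_left₀ (hτ _) (by linarith) 2
  have hlin : ∀ e, q * e ≤ 2 * τ x₀ * M * |e| + (M ^ 2 + A) * e ^ 2 := fun e => by
    have := (hlow e).trans (hup e)
    have h2 : |e| ^ 2 = e ^ 2 := sq_abs e
    nlinarith
  have hB : 0 ≤ M ^ 2 + A := by positivity
  have aux : ∀ r, (∀ e, 0 < e → r * e ≤ 2 * τ x₀ * M * e + (M ^ 2 + A) * e ^ 2) →
      r ≤ 2 * τ x₀ * M := fun r hr => by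
    by_contra! hcon
    set d := r - 2 * τ x₀ * M with hd
    have hdpos : 0 < d := by linarith
    have he : 0 < d / (M ^ 2 + A + 1) := by positivity
    have h1 := hr _ he
    set e := d / (M ^ 2 + A + 1) with hedef
    have h2 : e * (M ^ 2 + A + 1) = d := by rw [hedef]; field_simp
    have h3 : d * e ≤ (M ^ 2 + A) * e ^ 2 := by rw [hd]; linarith
    nlinarith [mul_pos he he]
  have hq1 : q ≤ 2 * τ x₀ * M := aux q fun e he => by
    have := hlin e; rwa [abs_of_pos he] at this
  have hq2 : -q ≤ 2 * τ x₀ * M := aux (-q) fun e he => by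
    have := hlin (-e); rw [abs_neg, abs_of_pos he] at this; nlinarith
  set t := q / (2 * τ x₀) with ht
  have htq : 2 * τ x₀ * t = q := by rw [ht]; field_simp
  have htM : |t| ≤ M := by
    rw [abs_le]
    constructor <;> nlinarith
  refine ⟨t, htM, fun k hk => ?_⟩
  have htsq : t ^ 2 ≤ M ^ 2 := by
    rw [← sq_abs t]; exact pow_le_pow_left₀ (abs_nonneg t) htM 2
  have hev1 : ∀ᶠ e in 𝓝 (0 : ℝ), 0 < τ x₀ + t * e - k * e ^ 2 := by
    have : Continuous fun e : ℝ => τ x₀ + t * e - k * e ^ 2 := by fun_prop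
    exact continuousAt_const.eventually_lt this.continuousAt (by simpa using h0)
  have hev2 : ∀ᶠ e in 𝓝 (0 : ℝ), t ^ 2 + A < 2 * k * (τ x₀ + t * e) - k ^ 2 * e ^ 2 := by
    have : Continuous fun e : ℝ => 2 * k * (τ x₀ + t * e) - k ^ 2 * e ^ 2 := by fun_prop
    exact continuousAt_const.eventually_lt this.continuousAt (by simp; linarith)
  filter_upwards [hev1, hev2] with e he1 he2
  refine ⟨he1.le, ?_⟩
  have hsq : (τ x₀ + t * e - k * e ^ 2) ^ 2 ≤ τ (x₀ + e) ^ 2 := by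
    refine le_trans ?_ (hlow e)
    rw [← htq]
    nlinarith [mul_le_mul_of_nonneg_right he2.le (sq_nonneg e)]
  exact le_of_sq_le_sq hsq (hτ _)

/-- Propagation of convexity by an Euler step with bounded centered noise, for `C²` functions. The
hypothesis `key` is an integration by parts inequality for the noise. -/
theorem ConvexOn.integral_euler_step_of_contDiff [IsProbabilityMeasure P] (hW : Measurable W)
    (hWs : ∀ ω, |W ω| ≤ s) (hs : 0 ≤ s) (hW0 : ∫ ω, W ω ∂P = 0)
    {f : ℝ → ℝ} (hf : ConvexOn ℝ univ f) (hf2 : ContDiff ℝ 2 f)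
    (β c : ℝ) {τ : ℝ → ℝ} {M A Λ : ℝ} (hτ : ∀ x, 0 ≤ τ x)
    (hLip : ∀ x y, |τ x - τ y| ≤ M * |x - y|) (hA : 0 ≤ A)
    (hsc : ConvexOn ℝ univ fun x => τ x ^ 2 + A * x ^ 2) (hΛ : M ^ 2 + A ≤ Λ)
    (key : ∀ m r t, 0 < r → |t| ≤ M →
      0 ≤ ∫ ω, deriv f (m + r * W ω) * W ω ∂P ∧
      Λ * ∫ ω, deriv f (m + r * W ω) * W ω ∂P ≤
        r * ∫ ω, deriv (deriv f) (m + r * W ω) * (β + t * W ω) ^ 2 ∂P) :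
    ConvexOn ℝ univ fun x => ∫ ω, f (β * x + c + τ x * W ω) ∂P := by
  have hfc : Continuous f := hf2.continuous
  have hf1c : Continuous (deriv f) := hf2.continuous_deriv (by norm_num)
  have hf2c : Continuous (deriv (deriv f)) := hf2.continuous_deriv_deriv
  have hf2nn := hf.deriv_deriv_nonneg (hf2.differentiable (by norm_num))
  have hτc : Continuous τ := by
    have : LipschitzWith M.toNNReal τ := LipschitzWith.of_dist_le_mul fun x y => by
      rw [Real.dist_eq, Real.dist_eq]
      exact (hLip x y).trans (mul_le_mul_of_nonneg_right (Real.le_coe_toNNReal M) (abs_nonneg _))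
    exact this.continuous
  have hint : ∀ {g : ℝ → ℝ}, Continuous g → Integrable (fun ω => g (W ω)) P := fun hg =>
    hg.integrable_comp_of_abs_le hW hWs
  refine convexOn_univ_of_second_difference
    (continuous_integral_comp_of_abs_le (G := fun x w => f (β * x + c + τ x * w)) hW hWs
      (by fun_prop)) fun x₀ δ hδ => ?_
  rcases (hτ x₀).eq_or_lt with h0 | h0
  · refine Eventually.of_forall fun e => ?_
    have h1 := hf.le_integral_comp_centered hW hWs hW0 (β * (x₀ + e) + c) (τ (x₀ + e))
    have h2 := hf.le_integral_comp_centered hW hWs hW0 (β * (x₀ - e) + c) (τ (x₀ - e))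
    have h3 := hf.2 (mem_univ (β * (x₀ + e) + c)) (mem_univ (β * (x₀ - e) + c))
      (by norm_num : (0 : ℝ) ≤ 1 / 2) (by norm_num : (0 : ℝ) ≤ 1 / 2) (by norm_num)
    have h4 : (1 / 2 : ℝ) • (β * (x₀ + e) + c) + (1 / 2 : ℝ) • (β * (x₀ - e) + c) = β * x₀ + c := by
      simp only [smul_eq_mul]; ring
    rw [h4, smul_eq_mul, smul_eq_mul] at h3
    rw [← h0]
    simp only [zero_mul, add_zero, integral_const, probReal_univ, one_smul]
    nlinarith [sq_nonneg e]
  obtain ⟨t, htM, ht⟩ := exists_slope_forall_eventually_le hτ hLip hA hsc h0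
  set m := β * x₀ + c with hm
  set r := τ x₀ with hr
  obtain ⟨hJ, hJQ⟩ := key m r t h0 htM
  set J := ∫ ω, deriv f (m + r * W ω) * W ω ∂P with hJdef
  set Q := ∫ ω, deriv (deriv f) (m + r * W ω) * (β + t * W ω) ^ 2 ∂P with hQdef
  set ε' := δ * r / (2 * (J + 1)) with hε'
  have hε'pos : 0 < ε' := by positivity
  set k := (Λ + ε') / (2 * r) with hk
  have hkr : 2 * k * r = Λ + ε' := by rw [hk]; field_simp
  have hkJ : 2 * k * J ≤ Q + δ / 2 := by
    have h1 : ε' * J ≤ δ * r / 2 := by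
      have : ε' * (J + 1) = δ * r / 2 := by rw [hε']; field_simp
      nlinarith
    have h2 : r * (2 * k * J) = Λ * J + ε' * J := by linear_combination J * hkr
    have h3 : r * (2 * k * J) ≤ r * (Q + δ / 2) := by nlinarith
    exact le_of_mul_le_mul_left h3 h0
  set C := |β| + |t| * s + |k| * s with hC
  have hC0 : 0 ≤ C := by positivity
  set ε := δ / (2 * (C ^ 2 + 1)) with hε
  have hεpos : 0 < ε := by positivity
  have hεC : ε * C ^ 2 ≤ δ / 2 := by
    have : ε * (C ^ 2 + 1) = δ / 2 := by rw [hε]; field_simp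
    nlinarith
  obtain ⟨η, hη, hT⟩ := exists_forall_taylor_two_le hf2 (|m| + r * s) hεpos
  have hev := ht k (by linarith)
  have hneg : Tendsto (fun e : ℝ => -e) (𝓝 0) (𝓝 0) := by
    simpa using (continuous_neg (G := ℝ)).tendsto 0
  have hsmall : ∀ᶠ e in 𝓝 (0 : ℝ), C * |e| < η ∧ |e| < 1 := by
    have h1 : Continuous fun e : ℝ => C * |e| := by fun_prop
    have h2 : Continuous fun e : ℝ => |e| := by fun_prop
    exact (h1.continuousAt.eventually_lt continuousAt_const (by simpa using hη)).and
      (h2.continuousAt.eventually_lt continuousAt_const (by simp))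
  filter_upwards [hev, hneg.eventually hev, hsmall] with e he hne hes
  have hD : ∀ ω, ∀ b : ℝ, |b| = |e| → |b * (β + t * W ω) - k * e ^ 2 * W ω| ≤ C * |e| := by
    intro ω b hb
    have h1 : |b * (β + t * W ω)| ≤ |e| * (|β| + |t| * s) := by
      rw [abs_mul, hb]
      refine mul_le_mul_of_nonneg_left ((abs_add_le _ _).trans ?_) (abs_nonneg _)
      rw [abs_mul]
      have := mul_le_mul_of_nonneg_left (hWs ω) (abs_nonneg t)
      linarith
    have h2 : |k * e ^ 2 * W ω| ≤ |e| * (|k| * s) := by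
      rw [abs_mul, abs_mul, abs_pow]
      have h3 : |k| * |W ω| ≤ |k| * s := mul_le_mul_of_nonneg_left (hWs ω) (abs_nonneg k)
      have h4 : |e| ^ 2 ≤ |e| := by nlinarith [abs_nonneg e, hes.2]
      calc |k| * |e| ^ 2 * |W ω| = |e| ^ 2 * (|k| * |W ω|) := by ring
        _ ≤ |e| * (|k| * s) := mul_le_mul h4 h3 (by positivity) (abs_nonneg e)
    calc _ ≤ |b * (β + t * W ω)| + |k * e ^ 2 * W ω| := abs_sub _ _
      _ ≤ _ := by rw [hC]; linarith
  have hpt : ∀ ω, 2 * f (m + r * W ω) - 2 * k * e ^ 2 * (deriv f (m + r * W ω) * W ω)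
      + e ^ 2 * (deriv (deriv f) (m + r * W ω) * (β + t * W ω) ^ 2) - ε * C ^ 2 * e ^ 2
      ≤ f (β * (x₀ + e) + c + (r + t * e - k * e ^ 2) * W ω)
        + f (β * (x₀ - e) + c + (r + t * (-e) - k * (-e) ^ 2) * W ω) := by
    intro ω
    have hY : |m + r * W ω| ≤ |m| + r * s := by
      refine (abs_add_le _ _).trans ?_
      rw [abs_mul, abs_of_pos h0]
      have := mul_le_mul_of_nonneg_left (hWs ω) h0.le
      linarith
    have hD1 := hD ω e rfl
    have hD2 := hD ω (-e) (abs_neg e)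
    have hT1 := hT _ _ hY (hD1.trans hes.1.le)
    have hT2 := hT _ _ hY (hD2.trans hes.1.le)
    have e1 : β * (x₀ + e) + c + (r + t * e - k * e ^ 2) * W ω
        = m + r * W ω + (e * (β + t * W ω) - k * e ^ 2 * W ω) := by rw [hm]; ring
    have e2 : β * (x₀ - e) + c + (r + t * (-e) - k * (-e) ^ 2) * W ω
        = m + r * W ω + (-e * (β + t * W ω) - k * e ^ 2 * W ω) := by rw [hm]; ring
    rw [e1, e2]
    have hsq : ∀ D, |D| ≤ C * |e| → D ^ 2 ≤ C ^ 2 * e ^ 2 := fun D hD => by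
      rw [← sq_abs D, ← sq_abs e, ← mul_pow]
      exact pow_le_pow_left₀ (abs_nonneg D) hD 2
    have q1 := mul_le_mul_of_nonneg_left (hsq _ hD1) hεpos.le
    have q2 := mul_le_mul_of_nonneg_left (hsq _ hD2) hεpos.le
    have q3 := mul_nonneg (hf2nn (m + r * W ω)) (sq_nonneg (k * e ^ 2 * W ω))
    linarith
  have i1 : Integrable (fun ω => f (m + r * W ω)) P :=
    hint (g := fun w => f (m + r * w)) (by fun_prop)
  have i2 : Integrable (fun ω => deriv f (m + r * W ω) * W ω) P :=
    hint (g := fun w => deriv f (m + r * w) * w) (by fun_prop)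
  have i3 : Integrable (fun ω => deriv (deriv f) (m + r * W ω) * (β + t * W ω) ^ 2) P :=
    hint (g := fun w => deriv (deriv f) (m + r * w) * (β + t * w) ^ 2) (by fun_prop)
  have i4 : ∀ a b, Integrable (fun ω => f (a + b * W ω)) P := fun a b =>
    hint (g := fun w => f (a + b * w)) (by fun_prop)
  have hI := integral_mono ((((i1.const_mul 2).sub (i2.const_mul (2 * k * e ^ 2))).add
    (i3.const_mul (e ^ 2))).sub (integrable_const (ε * C ^ 2 * e ^ 2)))
    ((i4 (β * (x₀ + e) + c) (r + t * e - k * e ^ 2)).add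
      (i4 (β * (x₀ - e) + c) (r + t * (-e) - k * (-e) ^ 2))) hpt
  rw [integral_add' (i4 _ _) (i4 _ _), integral_sub' (((i1.const_mul 2).sub
    (i2.const_mul (2 * k * e ^ 2))).add (i3.const_mul (e ^ 2))) (integrable_const _),
    integral_add' ((i1.const_mul 2).sub (i2.const_mul (2 * k * e ^ 2))) (i3.const_mul (e ^ 2)),
    integral_sub' (i1.const_mul 2) (i2.const_mul (2 * k * e ^ 2)), integral_const_mul,
    integral_const_mul, integral_const_mul, integral_const, probReal_univ, one_smul] at hI
  have m1 := hf.integral_comp_centered_mono hW hWs hW0 (β * (x₀ + e) + c) he.1 he.2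
  have m2 := hf.integral_comp_centered_mono hW hWs hW0 (β * (x₀ - e) + c) hne.1 hne.2
  rw [← sub_eq_add_neg] at m2
  have f1 := mul_le_mul_of_nonneg_right hkJ (sq_nonneg e)
  have f2 := mul_le_mul_of_nonneg_right hεC (sq_nonneg e)
  linarith

/-- Propagation of convexity by an Euler step with bounded centered noise satisfying an integration
by parts inequality. -/
theorem ConvexOn.integral_euler_step [IsProbabilityMeasure P] (hW : Measurable W)
    (hWs : ∀ ω, |W ω| ≤ s) (hs : 0 ≤ s) (hW0 : ∫ ω, W ω ∂P = 0)
    {f : ℝ → ℝ} (hf : ConvexOn ℝ univ f)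
    (β c : ℝ) {τ : ℝ → ℝ} {M A Λ : ℝ} (hτ : ∀ x, 0 ≤ τ x)
    (hLip : ∀ x y, |τ x - τ y| ≤ M * |x - y|) (hA : 0 ≤ A)
    (hsc : ConvexOn ℝ univ fun x => τ x ^ 2 + A * x ^ 2) (hΛ : M ^ 2 + A ≤ Λ)
    (key : ∀ g : ℝ → ℝ, ConvexOn ℝ univ g → ContDiff ℝ 2 g → ∀ m r t, 0 < r → |t| ≤ M →
      0 ≤ ∫ ω, deriv g (m + r * W ω) * W ω ∂P ∧
      Λ * ∫ ω, deriv g (m + r * W ω) * W ω ∂P ≤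
        r * ∫ ω, deriv (deriv g) (m + r * W ω) * (β + t * W ω) ^ 2 ∂P) :
    ConvexOn ℝ univ fun x => ∫ ω, f (β * x + c + τ x * W ω) ∂P := by
  refine ⟨convex_univ, fun x _ y _ p q hp hq hpq => ?_⟩
  simp only [smul_eq_mul]
  set z := p * x + q * y with hz
  let N : ℝ → ℝ := fun u => |β * u + c| + τ u * s
  have hbound : ∀ u ω, |β * u + c + τ u * W ω| ≤ N u := fun u ω => by
    refine (abs_add_le _ _).trans ?_
    rw [abs_mul, abs_of_nonneg (hτ u)]
    have := mul_le_mul_of_nonneg_left (hWs ω) (hτ u)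
    simp only [N]; linarith
  have hfc : Continuous f := continuousOn_univ.1 (hf.continuousOn isOpen_univ)
  refine le_of_forall_pos_le_add fun ε hε => ?_
  obtain ⟨g, hg2, hg, hgf⟩ := hf.exists_contDiff_approx (max (N x) (max (N y) (N z))) (half_pos hε)
  have hG := hg.integral_euler_step_of_contDiff hW hWs hs hW0 hg2 β c hτ hLip hA hsc hΛ (key g hg hg2)
  have hclose : ∀ u, N u ≤ max (N x) (max (N y) (N z)) →
      |∫ ω, g (β * u + c + τ u * W ω) ∂P - ∫ ω, f (β * u + c + τ u * W ω) ∂P| ≤ ε / 2 := by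
    intro u hu
    have i1 : Integrable (fun ω => g (β * u + c + τ u * W ω)) P :=
      Continuous.integrable_comp_of_abs_le (g := fun w => g (β * u + c + τ u * w)) hW hWs
        (by have := hg2.continuous; fun_prop)
    have i2 : Integrable (fun ω => f (β * u + c + τ u * W ω)) P :=
      Continuous.integrable_comp_of_abs_le (g := fun w => f (β * u + c + τ u * w)) hW hWs
        (by fun_prop)
    rw [← integral_sub i1 i2]
    have := norm_integral_le_of_norm_le_const (μ := P) (C := ε / 2)
      (f := fun ω => g (β * u + c + τ u * W ω) - f (β * u + c + τ u * W ω)) (ae_of_all _ fun ω =>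
      hgf (β * u + c + τ u * W ω) ((hbound u ω).trans hu))
    simpa using this
  have h1 := abs_le.1 (hclose x (le_max_left _ _))
  have h2 := abs_le.1 (hclose y ((le_max_left _ _).trans (le_max_right _ _)))
  have h3 := abs_le.1 (hclose z ((le_max_right _ _).trans (le_max_right _ _)))
  have h4 := hG.2 (mem_univ x) (mem_univ y) hp hq hpq
  simp only [smul_eq_mul, ← hz] at h4
  have h5 := mul_le_mul_of_nonneg_left h1.2 hp
  have h6 := mul_le_mul_of_nonneg_left h2.2 hq
  have h7 : p * (ε / 2) + q * (ε / 2) = ε / 2 := by rw [← add_mul, hpq, one_mul]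
  linarith

end BoundedNoise

section TruncatedGaussian

theorem hasDerivAt_gaussianPDFReal_zero_one (z : ℝ) :
    HasDerivAt (gaussianPDFReal 0 1) (-(z * gaussianPDFReal 0 1 z)) z := by
  have h : HasDerivAt (fun z : ℝ => -(z - 0) ^ 2 / (2 * ((1 : NNReal) : ℝ))) (-z) z := by
    have := (((hasDerivAt_id z).sub_const (0 : ℝ)).pow 2).neg.div_const (2 * ((1 : NNReal) : ℝ))
    exact this.congr_deriv (by simp; ring)
  rw [gaussianPDFReal_def]
  exact (h.exp.const_mul (Real.sqrt (2 * Real.pi * ((1 : NNReal) : ℝ)))⁻¹).congr_deriv (by ring)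

theorem continuous_gaussianPDFReal_zero_one : Continuous (gaussianPDFReal 0 1) :=
  continuous_iff_continuousAt.2 fun z => (hasDerivAt_gaussianPDFReal_zero_one z).continuousAt

theorem gaussianPDFReal_zero_one_mul_exp (s z : ℝ) :
    gaussianPDFReal 0 1 s = gaussianPDFReal 0 1 z * Real.exp ((z ^ 2 - s ^ 2) / 2) := by
  simp only [gaussianPDFReal_def, mul_assoc, ← Real.exp_add]
  congr 2
  simp
  ring

theorem gaussianPDFReal_zero_one_sub_nonneg {s z : ℝ} (hz : |z| ≤ s) :
    0 ≤ gaussianPDFReal 0 1 z - gaussianPDFReal 0 1 s := by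
  have hsq : z ^ 2 ≤ s ^ 2 := by
    rw [← sq_abs z]; exact pow_le_pow_left₀ (abs_nonneg z) hz 2
  have h1 : Real.exp ((z ^ 2 - s ^ 2) / 2) ≤ 1 := Real.exp_le_one_iff.2 (by linarith)
  rw [gaussianPDFReal_zero_one_mul_exp s z]
  nlinarith [gaussianPDFReal_nonneg 0 1 z]

theorem gaussianPDFReal_zero_one_sub_le (s z : ℝ) :
    gaussianPDFReal 0 1 z - gaussianPDFReal 0 1 s ≤ s ^ 2 / 2 * gaussianPDFReal 0 1 z := by
  have h1 := Real.add_one_le_exp ((z ^ 2 - s ^ 2) / 2)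
  rw [gaussianPDFReal_zero_one_mul_exp s z]
  have h2 : 1 - s ^ 2 / 2 ≤ Real.exp ((z ^ 2 - s ^ 2) / 2) := by nlinarith [sq_nonneg z]
  nlinarith [mul_le_mul_of_nonneg_left h2 (gaussianPDFReal_nonneg 0 1 z)]

/-- Integration by parts for the standard Gaussian density on a symmetric interval. -/
theorem integral_mul_id_mul_gaussianPDFReal {u u' : ℝ → ℝ} (hu : ∀ z, HasDerivAt u (u' z) z)
    (hu' : Continuous u') (s : ℝ) :
    ∫ z in -s..s, u z * z * gaussianPDFReal 0 1 z
      = ∫ z in -s..s, u' z * (gaussianPDFReal 0 1 z - gaussianPDFReal 0 1 s) := by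
  have hφ := continuous_gaussianPDFReal_zero_one
  have h := intervalIntegral.integral_mul_deriv_eq_deriv_mul (a := -s) (b := s)
    (v := fun z => gaussianPDFReal 0 1 s - gaussianPDFReal 0 1 z)
    (v' := fun z => z * gaussianPDFReal 0 1 z)
    (fun z _ => hu z)
    (fun z _ => by simpa using (hasDerivAt_gaussianPDFReal_zero_one z).const_sub _)
    (hu'.intervalIntegrable _ _) ((by fun_prop : Continuous fun z =>
      z * gaussianPDFReal 0 1 z).intervalIntegrable _ _)
  have hsymm : gaussianPDFReal 0 1 (-s) = gaussianPDFReal 0 1 s := by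
    simp [gaussianPDFReal_def]
  simp only [hsymm, sub_self, mul_zero, zero_sub] at h
  simp_rw [mul_assoc]
  rw [h, ← intervalIntegral.integral_neg]
  congr 1 with z
  ring

variable {Ω : Type*} [MeasurableSpace Ω] {P : Measure Ω} {Z : Ω → ℝ} {s : ℝ}

theorem integral_ite_abs_le_of_map_eq_gaussianReal (hZmeas : Measurable Z)
    (hZ : Measure.map Z P = gaussianReal 0 1) (hs : 0 ≤ s) {g : ℝ → ℝ} (hg : Continuous g) :
    ∫ ω, (if |Z ω| ≤ s then g (Z ω) else 0) ∂P
      = ∫ z in -s..s, g z * gaussianPDFReal 0 1 z := by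
  have hmeas : Measurable fun z : ℝ => if |z| ≤ s then g z else 0 :=
    Measurable.ite (measurableSet_le (by fun_prop) measurable_const) hg.measurable measurable_const
  rw [← integral_map (f := fun z : ℝ => if |z| ≤ s then g z else 0) hZmeas.aemeasurable
    hmeas.aestronglyMeasurable, hZ, integral_gaussianReal_eq_integral_smul one_ne_zero,
    intervalIntegral.integral_of_le (by linarith), ← integral_Icc_eq_integral_Ioc,
    ← integral_indicator measurableSet_Icc]
  congr 1 with z
  by_cases hz : |z| ≤ s
  · rw [indicator_of_mem (show z ∈ Icc (-s) s from abs_le.1 hz), if_pos hz, smul_eq_mul, mul_comm]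
  · rw [indicator_of_notMem (fun h : z ∈ Icc (-s) s => hz (abs_le.2 h)), if_neg hz, smul_zero]

theorem integral_truncated_gaussian_eq_zero (hZmeas : Measurable Z)
    (hZ : Measure.map Z P = gaussianReal 0 1) (hs : 0 ≤ s) :
    ∫ ω, (if |Z ω| ≤ s then Z ω else 0) ∂P = 0 := by
  rw [integral_ite_abs_le_of_map_eq_gaussianReal (g := fun z => z) hZmeas hZ hs continuous_id]
  have := integral_mul_id_mul_gaussianPDFReal (u := fun _ => 1) (u' := fun _ => 0)
    (fun z => hasDerivAt_const z 1) continuous_const s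
  simpa using this

/-- Integration by parts inequality for truncated Gaussian noise and `C²` convex functions. -/
theorem truncated_gaussian_integration_by_parts [IsProbabilityMeasure P] (hZmeas : Measurable Z)
    (hZ : Measure.map Z P = gaussianReal 0 1) (hs : 0 ≤ s) {g : ℝ → ℝ}
    (hg : ConvexOn ℝ univ g) (hg2 : ContDiff ℝ 2 g) {lam Λ β m r t : ℝ}
    (hlam : lam ∈ Ioo 0 (1 / (2 + Real.sqrt 2))) (hΛ0 : 0 ≤ Λ) (hΛ : Λ * s ^ 2 ≤ lam ^ 2)
    (hβ : 1 / 2 ≤ β) (hr : 0 < r) (ht : t ^ 2 ≤ Λ) :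
    0 ≤ ∫ ω, deriv g (m + r * (if |Z ω| ≤ s then Z ω else 0)) * (if |Z ω| ≤ s then Z ω else 0) ∂P ∧
    Λ * ∫ ω, deriv g (m + r * (if |Z ω| ≤ s then Z ω else 0)) *
        (if |Z ω| ≤ s then Z ω else 0) ∂P ≤
      r * ∫ ω, deriv (deriv g) (m + r * (if |Z ω| ≤ s then Z ω else 0)) *
        (β + t * (if |Z ω| ≤ s then Z ω else 0)) ^ 2 ∂P := by
  have hφ := continuous_gaussianPDFReal_zero_one
  have hg1c : Continuous (deriv g) := hg2.continuous_deriv (by norm_num)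
  have hg2c : Continuous (deriv (deriv g)) := hg2.continuous_deriv_deriv
  have hg2nn := hg.deriv_deriv_nonneg (hg2.differentiable (by norm_num))
  have hg1d : Differentiable ℝ (deriv g) := by
    have := hg2.differentiable_iteratedDeriv 1 (by norm_num)
    simpa [iteratedDeriv_one] using this
  have hJ : ∫ ω, deriv g (m + r * (if |Z ω| ≤ s then Z ω else 0)) *
      (if |Z ω| ≤ s then Z ω else 0) ∂P
      = r * ∫ z in -s..s, deriv (deriv g) (m + r * z) *
        (gaussianPDFReal 0 1 z - gaussianPDFReal 0 1 s) := by
    have h1 := integral_ite_abs_le_of_map_eq_gaussianReal (P := P)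
      (g := fun z => deriv g (m + r * z) * z) hZmeas hZ hs (by fun_prop)
    have h2 := integral_mul_id_mul_gaussianPDFReal (u := fun z => deriv g (m + r * z))
      (u' := fun z => r * deriv (deriv g) (m + r * z))
      (fun z => by
        have h3 : HasDerivAt (fun z : ℝ => m + r * z) r z := by
          simpa using ((hasDerivAt_id z).const_mul r).const_add m
        have := (hg1d (m + r * z)).hasDerivAt.comp z h3
        rwa [mul_comm] at this) (by fun_prop) s
    rw [h2] at h1
    simp_rw [mul_assoc] at h1
    rw [intervalIntegral.integral_const_mul] at h1
    rw [← h1]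
    congr 1 with ω
    split_ifs <;> simp
  have hss : -s ≤ s := by linarith
  rw [hJ]
  constructor
  · exact mul_nonneg hr.le (intervalIntegral.integral_nonneg hss fun z hz =>
      mul_nonneg (hg2nn _) (gaussianPDFReal_zero_one_sub_nonneg (abs_le.2 hz)))
  have hsqrt : Real.sqrt 2 ^ 2 = 2 := Real.sq_sqrt (by norm_num)
  have hsqrt0 : 0 ≤ Real.sqrt 2 := Real.sqrt_nonneg 2
  have hlam2 : lam * (2 + Real.sqrt 2) < 1 := (lt_div_iff₀ (by positivity)).1 hlam.2
  have hlam0 : 0 < lam := hlam.1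
  have hpt : ∀ z ∈ Icc (-s) s, Λ * (gaussianPDFReal 0 1 z - gaussianPDFReal 0 1 s) ≤
      (β + t * z) ^ 2 * gaussianPDFReal 0 1 z := by
    intro z hz
    have h1 := mul_le_mul_of_nonneg_left (gaussianPDFReal_zero_one_sub_le s z) hΛ0
    have hzs : z ^ 2 ≤ s ^ 2 := by
      rw [← sq_abs z]; exact pow_le_pow_left₀ (abs_nonneg z) (abs_le.2 hz) 2
    have htz : (t * z) ^ 2 ≤ lam ^ 2 := by
      rw [mul_pow]
      exact (mul_le_mul ht hzs (sq_nonneg z) hΛ0).trans hΛ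
    have htz' := (abs_le.1 (abs_le_of_sq_le_sq htz hlam0.le)).1
    have h2 : lam * Real.sqrt 2 / 2 ≤ β + t * z := by nlinarith
    have h3 : lam ^ 2 / 2 ≤ (β + t * z) ^ 2 := by
      have := pow_le_pow_left₀ (by positivity : 0 ≤ lam * Real.sqrt 2 / 2) h2 2
      have h4 : (lam * Real.sqrt 2 / 2) ^ 2 = lam ^ 2 / 2 := by
        rw [div_pow, mul_pow, hsqrt]; ring
      rwa [h4] at this
    have h5 : Λ * (s ^ 2 / 2) ≤ (β + t * z) ^ 2 := by linarith
    have h6 := mul_le_mul_of_nonneg_right h5 (gaussianPDFReal_nonneg 0 1 z)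
    linarith
  have hle : Λ * ∫ z in -s..s, deriv (deriv g) (m + r * z) *
        (gaussianPDFReal 0 1 z - gaussianPDFReal 0 1 s) ≤
      ∫ z in -s..s, deriv (deriv g) (m + r * z) * (β + t * z) ^ 2 * gaussianPDFReal 0 1 z := by
    rw [← intervalIntegral.integral_const_mul]
    refine intervalIntegral.integral_mono_on hss
      (Continuous.intervalIntegrable (by fun_prop) _ _)
      (Continuous.intervalIntegrable (by fun_prop) _ _) fun z hz => ?_
    have := mul_le_mul_of_nonneg_left (hpt z hz) (hg2nn (m + r * z))
    linarith
  rw [← integral_ite_abs_le_of_map_eq_gaussianReal (P := P)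
    (g := fun z => deriv (deriv g) (m + r * z) * (β + t * z) ^ 2) hZmeas hZ hs (by fun_prop)] at hle
  have hW : Measurable fun ω => if |Z ω| ≤ s then Z ω else 0 :=
    Measurable.ite (measurableSet_le (by fun_prop) measurable_const) hZmeas measurable_const
  have hWs : ∀ ω, |if |Z ω| ≤ s then Z ω else 0| ≤ s := fun ω => by
    split_ifs with h
    · exact h
    · simpa using hs
  have hint : Integrable (fun ω => deriv (deriv g) (m + r * (if |Z ω| ≤ s then Z ω else 0)) *
      (β + t * (if |Z ω| ≤ s then Z ω else 0)) ^ 2) P :=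
    Continuous.integrable_comp_of_abs_le
      (g := fun w => deriv (deriv g) (m + r * w) * (β + t * w) ^ 2) hW hWs (by fun_prop)
  have hlast := integral_mono_of_nonneg (μ := P)
    (f := fun ω => if |Z ω| ≤ s then deriv (deriv g) (m + r * Z ω) * (β + t * Z ω) ^ 2 else 0)
    (ae_of_all _ fun ω => by
      simp only [Pi.zero_apply]
      split_ifs
      · exact mul_nonneg (hg2nn _) (sq_nonneg _)
      · exact le_rfl) hint
    (ae_of_all _ fun ω => by
      simp only
      split_ifs
      · exact le_rfl
      · exact mul_nonneg (hg2nn _) (sq_nonneg _))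
  nlinarith [mul_le_mul_of_nonneg_left (hle.trans hlast) hr.le]

/-- Convexity propagates through one truncated Euler step. -/
theorem convexOn_integral_truncated_euler_step [IsProbabilityMeasure P] (hZmeas : Measurable Z)
    (hZ : Measure.map Z P = gaussianReal 0 1) {h L a lam κ ζ : ℝ} {σ : ℝ → ℝ} (hh : 0 < h)
    (hL : 0 < L) (ha : 0 ≤ a) (hlam : lam ∈ Ioo 0 (1 / (2 + Real.sqrt 2)))
    (hσ0 : ∀ x, 0 ≤ σ x) (hσLip : ∀ x y, |σ x - σ y| ≤ L * |x - y|)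
    (hsc : ConvexOn ℝ univ fun x => σ x ^ 2 + a * x ^ 2) (hdrift : h * max (-κ) 0 < 1 / 2)
    {f : ℝ → ℝ} (hf : ConvexOn ℝ univ f) :
    ConvexOn ℝ univ fun x => ∫ ω, f (x + h * κ * (x - ζ) + Real.sqrt h * σ x *
      (if |Z ω| ≤ lam / Real.sqrt (h * (L ^ 2 + a)) then Z ω else 0)) ∂P := by
  set s := lam / Real.sqrt (h * (L ^ 2 + a)) with hs
  have hΛpos : 0 < h * (L ^ 2 + a) := by positivity
  have hlam0 : 0 < lam := hlam.1
  have hs0 : 0 ≤ s := by positivity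
  have hΛs : h * (L ^ 2 + a) * s ^ 2 ≤ lam ^ 2 := by
    rw [hs, div_pow, Real.sq_sqrt hΛpos.le, mul_div_cancel₀ _ hΛpos.ne']
  have hβ : 1 / 2 ≤ 1 + h * κ := by
    have := mul_le_mul_of_nonneg_left (le_max_left (-κ) 0) hh.le
    linarith
  have hsq : Real.sqrt h ^ 2 = h := Real.sq_sqrt hh.le
  have hMΛ : (Real.sqrt h * L) ^ 2 + h * a ≤ h * (L ^ 2 + a) := by
    rw [mul_pow, hsq]; linarith
  have hW : Measurable fun ω => if |Z ω| ≤ s then Z ω else 0 :=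
    Measurable.ite (measurableSet_le (by fun_prop) measurable_const) hZmeas measurable_const
  have hWs : ∀ ω, |if |Z ω| ≤ s then Z ω else 0| ≤ s := fun ω => by
    split_ifs with hω
    · exact hω
    · simpa using hs0
  have hscale : ConvexOn ℝ univ fun x => (Real.sqrt h * σ x) ^ 2 + h * a * x ^ 2 := by
    have hfun : (fun x => (Real.sqrt h * σ x) ^ 2 + h * a * x ^ 2) =
        fun x => h • (σ x ^ 2 + a * x ^ 2) := by
      ext x
      rw [mul_pow, hsq, smul_eq_mul]; ring
    exact hfun ▸ hsc.smul hh.le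
  have hstep := hf.integral_euler_step (P := P) hW hWs hs0
    (integral_truncated_gaussian_eq_zero hZmeas hZ hs0) (1 + h * κ) (-(h * κ * ζ))
    (τ := fun x => Real.sqrt h * σ x) (M := Real.sqrt h * L) (A := h * a)
    (fun x => mul_nonneg (Real.sqrt_nonneg h) (hσ0 x))
    (fun x y => by
      rw [← mul_sub, abs_mul, abs_of_nonneg (Real.sqrt_nonneg h), mul_assoc]
      exact mul_le_mul_of_nonneg_left (hσLip x y) (Real.sqrt_nonneg h))
    (by positivity) hscale hMΛ
    (fun g hg hg2 m r t hr ht => truncated_gaussian_integration_by_parts hZmeas hZ hs0 hg hg2 hlam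
      hΛpos.le hΛs hβ hr (by
        have h1 : t ^ 2 ≤ (Real.sqrt h * L) ^ 2 := by
          rw [← sq_abs t]; exact pow_le_pow_left₀ (abs_nonneg t) ht 2
        have h2 : 0 ≤ h * a := by positivity
        linarith))
  convert hstep using 6
  ring

end TruncatedGaussian

/-- Convexity propagates through compositions of truncated Euler transition operators. -/
theorem convexOn_truncEulerComp {Ω : Type*} [MeasurableSpace Ω] {P : Measure Ω}
    [IsProbabilityMeasure P] {Z : Ω → ℝ} (hZmeas : Measurable Z)
    (hZ : Measure.map Z P = gaussianReal 0 1) {h L a lam ζ : ℝ} {κ : ℕ → ℝ} {σ : ℕ → ℝ → ℝ}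
    (hh : 0 < h) (hL : 0 < L) (ha : 0 ≤ a) (hlam : lam ∈ Ioo 0 (1 / (2 + Real.sqrt 2)))
    (hσ0 : ∀ ℓ x, 0 ≤ σ ℓ x) (hσLip : ∀ ℓ x y, |σ ℓ x - σ ℓ y| ≤ L * |x - y|)
    (hsc : ∀ ℓ, ConvexOn ℝ univ fun x => σ ℓ x ^ 2 + a * x ^ 2) {i j : ℕ}
    (hdrift : ∀ ℓ < j, h * max (-κ ℓ) 0 < 1 / 2) {f : ℝ → ℝ} (hf : ConvexOn ℝ univ f) :
    ConvexOn ℝ univ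
      (truncEulerComp P Z (lam / Real.sqrt (h * (L ^ 2 + a))) h κ ζ σ i j f) := by
  have hmem : ∀ ℓ ∈ List.range' i (j - i), ℓ < j := fun ℓ hℓ => by
    rw [List.mem_range'_1] at hℓ; omega
  unfold truncEulerComp
  generalize List.range' i (j - i) = l at hmem ⊢
  induction l with
  | nil => exact hf
  | cons ℓ l ih =>
    rw [List.foldr_cons]
    exact convexOn_integral_truncated_euler_step hZmeas hZ hh hL ha hlam (hσ0 ℓ) (hσLip ℓ) (hsc ℓ)
      (hdrift ℓ (hmem ℓ List.mem_cons_self)) (ih fun ℓ' hℓ' => hmem ℓ' (List.mem_cons_of_mem _ hℓ'))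

/-- A pointwise supremum of convex functions is convex. -/
theorem convexOn_of_forall_isLUB {ι : Type*} {S : Set ι} {F : ι → ℝ → ℝ} {v : ℝ → ℝ}
    (hF : ∀ i ∈ S, ConvexOn ℝ univ (F i)) (hv : ∀ x, IsLUB {r | ∃ i ∈ S, r = F i x} (v x)) :
    ConvexOn ℝ univ v := by
  refine ⟨convex_univ, fun x _ y _ p q hp hq hpq => (hv _).2 ?_⟩
  rintro _ ⟨i, hi, rfl⟩
  refine ((hF i hi).2 (mem_univ x) (mem_univ y) hp hq hpq).trans ?_
  exact add_le_add (smul_le_smul_of_nonneg_left ((hv x).1 ⟨i, hi, rfl⟩) hp)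
    (smul_le_smul_of_nonneg_left ((hv y).1 ⟨i, hi, rfl⟩) hq)

/-- **Propagation of convexity through the truncated BDPP (one-dimensional, semi-convex
volatility).** If the payoffs `Ψ_k(q, ·)` and terminal `P_n(·, Q)` are convex with at most
linear growth, each `σ_t` is `L`-Lipschitz, nonnegative and semi-convex with common constant
`a`, and `h·max(−κ(t_ℓ), 0) < 1/2` for every `ℓ`, then each truncated swing value function
`x ↦ ṽ_k(x, Q)` is convex. -/
theorem truncated_swing_value_convexOn {n m : ℕ} (hn : 1 ≤ n) (hm : 1 ≤ m)
    {T : ℝ} (hT : 0 < T)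
    {Ω : Type*} [MeasurableSpace Ω] (P : Measure Ω) [IsProbabilityMeasure P]
    (Z : Ω → ℝ) (hZmeas : Measurable Z) (hZ : Measure.map Z P = gaussianReal 0 1)
    (κ : ℝ → ℝ) (hκ : Continuous κ) (ζ : ℝ)
    (σ : ℝ → ℝ → ℝ) (L : ℝ) (hL : 0 < L)
    (hσ0 : ∀ t x, 0 ≤ σ t x)
    (hσLip : ∀ t x y, |σ t x - σ t y| ≤ L * |x - y|)
    (a : ℝ) (ha : 0 ≤ a)
    (hsc : ∀ t, ConvexOn ℝ Set.univ fun x => σ t x ^ 2 + a * x ^ 2)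
    (hdrift : ∀ ℓ, ℓ < m * n →
      (T / ((m : ℝ) * (n : ℝ))) * max (-κ ((ℓ : ℝ) * T / ((m : ℝ) * (n : ℝ)))) 0 < 1 / 2)
    (lam : ℝ) (hlam : lam ∈ Set.Ioo 0 (1 / (2 + Real.sqrt 2)))
    (qbar : ℝ) (hqbar : 0 < qbar)
    (Adm : ℕ → ℝ → Set ℝ)
    (hAdm : ∀ k, k < n → ∀ Q, (Adm k Q).Nonempty ∧ Adm k Q ⊆ Set.Icc 0 qbar)
    (Ψ : ℕ → ℝ → ℝ → ℝ) (Pn : ℝ → ℝ → ℝ)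
    (hΨcvx : ∀ k, k < n → ∀ qc ∈ Set.Icc (0 : ℝ) qbar,
      ConvexOn ℝ Set.univ (fun x => Ψ k qc x) ∧ ∃ C, ∀ x, |Ψ k qc x| ≤ C * (1 + |x|))
    (hPncvx : ∀ Q, ConvexOn ℝ Set.univ (fun x => Pn x Q) ∧
      ∃ C, ∀ x, |Pn x Q| ≤ C * (1 + |x|))
    (v : ℕ → ℝ → ℝ → ℝ)
    (hvn : ∀ x Q, v n x Q = Pn x Q)
    (hrec : ∀ k, k < n → ∀ x Q,
      IsLUB {r : ℝ | ∃ qc ∈ Adm k Q, r = Ψ k qc x +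
        truncEulerComp P Z (lam / Real.sqrt ((T / ((m : ℝ) * (n : ℝ))) * (L ^ 2 + a)))
          (T / ((m : ℝ) * (n : ℝ)))
          (fun ℓ => κ ((ℓ : ℝ) * T / ((m : ℝ) * (n : ℝ)))) ζ
          (fun ℓ => σ ((ℓ : ℝ) * T / ((m : ℝ) * (n : ℝ))))
          (k * m) ((k + 1) * m)
          (fun y => v (k + 1) y (Q + qc)) x}
        (v k x Q)) :
    ∀ k, k ≤ n → ∀ Q, ConvexOn ℝ Set.univ fun x => v k x Q := by
  have hm0 : (0 : ℝ) < m := by exact_mod_cast hm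
  have hn0 : (0 : ℝ) < n := by exact_mod_cast hn
  have hh : 0 < T / ((m : ℝ) * (n : ℝ)) := by positivity
  intro k hk
  induction hk using Nat.decreasingInduction with
  | self => exact fun Q => by simpa only [hvn] using (hPncvx Q).1
  | of_succ k hk ih =>
    intro Q
    refine convexOn_of_forall_isLUB (fun qc hqc => ?_) (fun x => hrec k hk x Q)
    refine (hΨcvx k hk qc ((hAdm k hk Q).2 hqc)).1.add ?_
    refine convexOn_truncEulerComp hZmeas hZ hh hL ha hlam (fun ℓ => hσ0 _) (fun ℓ => hσLip _)
      (fun ℓ => hsc _) (fun ℓ hℓ => hdrift ℓ ?_) (ih (Q + qc))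
    exact hℓ.trans_le (by rw [mul_comm m n]; exact Nat.mul_le_mul_right m hk)
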